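/- For a prime power q and integers n ≥ d ≥ 1 with d ≤ t, the maximum dimension k of a linear code C ⊆ F_q^n with dmin(C^(t)) ≥ d equals floor(n/d); that is, a_q^(t)(n,d) = ⌊n/d⌋ for 1 ≤ d ≤ t ≤ n. -/

import Mathlib

noncomputable section

/-- The componentwise product code of two linear codes. -/
def prodCode (F : Type*) [Field F] {n : ℕ}
    (C C' : Submodule F (Fin n → F)) : Submodule F (Fin n → F) :=
  Submodule.span F {z | ∃ c ∈ C, ∃ c' ∈ C', z = c * c'}

/-- The t-fold componentwise power of a code (convention: 0th power is ⊤). -/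
def powCode (F : Type*) [Field F] {n : ℕ} (C : Submodule F (Fin n → F)) :
    ℕ → Submodule F (Fin n → F)
  | 0 => ⊤
  | 1 => C
  | (t+2) => prodCode F (powCode F C (t+1)) C

/-- Minimum distance: minimum Hamming weight of a nonzero codeword. -/
def dmin {F : Type*} [Field F] [DecidableEq F] {n : ℕ}
    (C : Submodule F (Fin n → F)) : ℕ :=
  sInf {w | ∃ c ∈ C, c ≠ 0 ∧ hammingNorm c = w}

/-- The dual code with respect to the standard bilinear form. -/
def dualCode (F : Type*) [Field F] {n : ℕ}
    (C : Submodule F (Fin n → F)) : Submodule F (Fin n → F) where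
  carrier := {x | ∀ c ∈ C, ∑ i, x i * c i = 0}
  zero_mem' := by intro c hc; simp
  add_mem' := by
    intro a b ha hb c hc
    have h : ∑ i, (a + b) i * c i = (∑ i, a i * c i) + ∑ i, b i * c i := by
      simp [add_mul, Finset.sum_add_distrib]
    simp only [Set.mem_setOf_eq] at *
    rw [h, ha c hc, hb c hc, add_zero]
  smul_mem' := by
    intro r a ha c hc
    simp only [Pi.smul_apply, smul_eq_mul, mul_assoc, ← Finset.mul_sum, Set.mem_setOf_eq] at *
    rw [ha c hc, mul_zero]

/-- A code has full support if every coordinate carries a nonzero codeword value. -/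
def fullSupport (F : Type*) [Field F] {n : ℕ} (C : Submodule F (Fin n → F)) : Prop :=
  ∀ j, ∃ c ∈ C, c j ≠ 0

/-- Product code of a family of codes. -/
def prodFamily (F : Type*) [Field F] {n t : ℕ}
    (C : Fin t → Submodule F (Fin n → F)) : Submodule F (Fin n → F) :=
  Submodule.span F {z | ∃ c : Fin t → (Fin n → F), (∀ i, c i ∈ C i) ∧ z = ∏ i, c i}

/-!
The upper bound is the product Singleton bound: if every `C j` (`j ∈ κ`) has full support and all
nonzero products `∏ j, c j` with `c j ∈ C j` have weight at least `d ≥ |κ|`, then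
`∑ j, dim (C j) + d ≤ n + |κ|`. It goes by induction on the length `n`. If `D ≤ C i` is a nonzero
subcode whose support `Q` is not everything, then replacing `C i` by `D` and restricting all codes
to `Q` preserves the hypotheses, so the bound holds on `Q`. If all dimensions are at most `1`, the
bound is just `d ≤ n`. Otherwise let `D` consist of the codewords of some `C i` of dimension at
least `2` that vanish at one coordinate, which costs `C i` at most one dimension. The other codes
lose the dimensions of their subcodes supported on `P = Qᶜ`, and peeling the supports of such
subcodes off `P` one at a time shows that these dimensions add up to at most `|P| - 1`.

Since a product of `t` codewords can be made to have the same zeros as a given product of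
`d ≤ t` of them, the case `|κ| = d` gives `d * dim C ≤ n`. Repeating every symbol `d` times attains
the bound, because the repetition code is closed under products.
-/

open Finset Module

section HammingNorm

variable {F ι : Type*} [DecidableEq F] [Fintype ι]

lemma hammingNorm_comp_of_eq_zero_off_range {α : Type*} [Fintype α] [Zero F] (f : α ↪ ι)
    {x : ι → F} (hx : ∀ i ∉ Set.range f, x i = 0) : hammingNorm (x ∘ f) = hammingNorm x := by
  have hmap : ({a | x (f a) ≠ 0} : Finset α).map f = ({i | x i ≠ 0} : Finset ι) := by
    ext i
    simp only [mem_map, mem_filter, mem_univ, true_and]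
    constructor
    · rintro ⟨a, ha, rfl⟩
      exact ha
    · intro hi
      obtain ⟨a, rfl⟩ := not_imp_comm.1 (hx i) hi
      exact ⟨a, hi, rfl⟩
  calc #{a | x (f a) ≠ 0} = #(({a | x (f a) ≠ 0} : Finset α).map f) := (card_map f).symm
    _ = #{i | x i ≠ 0} := by rw [hmap]

lemma hammingNorm_prod_comp_of_surjective {κ κ' : Type*} [Fintype κ] [Fintype κ']
    [CommMonoidWithZero F] [NoZeroDivisors F] [Nontrivial F] {g : κ' → κ}
    (hg : Function.Surjective g) (c : κ → ι → F) :
    hammingNorm (∏ j, c (g j)) = hammingNorm (∏ j, c j) := by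
  simp only [hammingNorm, prod_apply, ne_eq, prod_eq_zero_iff, mem_univ, true_and,
    hg.exists (p := fun j ↦ c j _ = 0)]

end HammingNorm

section Code

variable {F ι : Type*} [Field F]

/-- The code `C` restricted to the coordinates in `Q`, that is, punctured outside `Q`. -/
def restrictCode (Q : Finset ι) (C : Submodule F (ι → F)) : Submodule F (Q → F) :=
  C.map (LinearMap.funLeft F F ((↑) : Q → ι))

/-- The subcode of the codewords of `C` that vanish outside `P`. This is the shortened code of `C`
on `P`, kept inside `ι → F`. -/
def subcodeOn (P : Finset ι) (C : Submodule F (ι → F)) : Submodule F (ι → F) :=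
  C ⊓ Submodule.pi (↑P)ᶜ fun _ ↦ ⊥

lemma mem_restrictCode {Q : Finset ι} {C : Submodule F (ι → F)} {x : Q → F} :
    x ∈ restrictCode Q C ↔ ∃ c ∈ C, c ∘ (↑) = x := Iff.rfl

lemma mem_subcodeOn {P : Finset ι} {C : Submodule F (ι → F)} {c : ι → F} :
    c ∈ subcodeOn P C ↔ c ∈ C ∧ ∀ i ∉ P, c i = 0 := by
  simp [subcodeOn]

lemma subcodeOn_le (P : Finset ι) (C : Submodule F (ι → F)) : subcodeOn P C ≤ C := inf_le_left

variable [Fintype ι]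

open Classical in
/-- The support of a code: the coordinates at which some codeword is nonzero. -/
def codeSupport (C : Submodule F (ι → F)) : Finset ι := {i | ∃ c ∈ C, c i ≠ 0}

lemma mem_codeSupport {C : Submodule F (ι → F)} {i : ι} :
    i ∈ codeSupport C ↔ ∃ c ∈ C, c i ≠ 0 := by
  simp [codeSupport]

lemma eq_zero_of_notMem_codeSupport {C : Submodule F (ι → F)} {c : ι → F} (hc : c ∈ C) {i : ι}
    (hi : i ∉ codeSupport C) : c i = 0 := by
  by_contra h
  exact hi (mem_codeSupport.2 ⟨c, hc, h⟩)

lemma codeSupport_subcodeOn_subset (P : Finset ι) (C : Submodule F (ι → F)) :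
    codeSupport (subcodeOn P C) ⊆ P := by
  intro i hi
  obtain ⟨c, hc, hci⟩ := mem_codeSupport.1 hi
  exact not_imp_comm.1 ((mem_subcodeOn.1 hc).2 i) hci

lemma codeSupport_nonempty {C : Submodule F (ι → F)} : (codeSupport C).Nonempty ↔ C ≠ ⊥ := by
  simp only [Finset.Nonempty, mem_codeSupport, Submodule.ne_bot_iff, Function.ne_iff]
  tauto

lemma codeSupport_restrictCode {Q : Finset ι} {C : Submodule F (ι → F)}
    (h : Q ⊆ codeSupport C) : codeSupport (restrictCode Q C) = univ := by
  refine eq_univ_of_forall fun i ↦ ?_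
  obtain ⟨c, hc, hci⟩ := mem_codeSupport.1 (h i.2)
  exact mem_codeSupport.2 ⟨c ∘ (↑), mem_restrictCode.2 ⟨c, hc, rfl⟩, hci⟩

lemma finrank_restrictCode_pos {Q : Finset ι} (hQ : Q.Nonempty) {C : Submodule F (ι → F)}
    (h : Q ⊆ codeSupport C) : 0 < finrank F (restrictCode Q C) := by
  have : Nonempty Q := hQ.to_subtype
  rw [Nat.pos_iff_ne_zero, Ne, Submodule.finrank_eq_zero, ← Ne, ← codeSupport_nonempty,
    codeSupport_restrictCode h]
  exact univ_nonempty

variable [DecidableEq ι]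

lemma finrank_restrictCode_add_finrank_subcodeOn_compl (Q : Finset ι) (C : Submodule F (ι → F)) :
    finrank F (restrictCode Q C) + finrank F (subcodeOn Qᶜ C) = finrank F C := by
  let res := LinearMap.funLeft F F ((↑) : Q → ι)
  have hker : LinearMap.ker res = Submodule.pi (↑Qᶜ)ᶜ fun _ ↦ ⊥ := by
    ext c
    simp [res, funext_iff, LinearMap.funLeft_apply]
  rw [← LinearMap.finrank_range_add_finrank_ker (res.domRestrict C), LinearMap.range_domRestrict,
    LinearMap.ker_domRestrict, ← Submodule.finrank_map_subtype_eq, Submodule.map_comap_subtype,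
    hker]
  rfl

omit [Fintype ι] in
lemma finrank_subcodeOn_le_add [Finite ι] (P Q : Finset ι) (C : Submodule F (ι → F)) :
    finrank F (subcodeOn P C) ≤ finrank F (restrictCode Q C) + finrank F (subcodeOn (P \ Q) C) := by
  have := Fintype.ofFinite ι
  have hsub : subcodeOn Qᶜ (subcodeOn P C) = subcodeOn (P \ Q) C := by
    ext c
    simp only [mem_subcodeOn, mem_compl, mem_sdiff]
    grind
  rw [← finrank_restrictCode_add_finrank_subcodeOn_compl Q (subcodeOn P C), hsub]
  gcongr
  exact Submodule.finrank_mono (Submodule.map_mono (subcodeOn_le P C))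

omit [Fintype ι] in
lemma sum_finrank_subcodeOn_le_sum_add [Finite ι] {κ : Type*} (P Q : Finset ι)
    (C : κ → Submodule F (ι → F)) (s : Finset κ) :
    ∑ j ∈ s, finrank F (subcodeOn P (C j)) ≤
      ∑ j ∈ s, finrank F (restrictCode Q (C j)) + ∑ j ∈ s, finrank F (subcodeOn (P \ Q) (C j)) := by
  rw [← sum_add_distrib]
  exact sum_le_sum fun j _ ↦ finrank_subcodeOn_le_add P Q (C j)

omit [DecidableEq ι] in
lemma finrank_restrictCode_codeSupport (C : Submodule F (ι → F)) :
    finrank F (restrictCode (codeSupport C) C) = finrank F C := by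
  classical
  have hbot : subcodeOn (codeSupport C)ᶜ C = ⊥ := by
    refine (Submodule.eq_bot_iff _).2 fun c hc ↦ funext fun i ↦ ?_
    by_cases hi : i ∈ codeSupport C
    · exact (mem_subcodeOn.1 hc).2 i (notMem_compl.2 hi)
    · exact eq_zero_of_notMem_codeSupport (subcodeOn_le _ _ hc) hi
  rw [← finrank_restrictCode_add_finrank_subcodeOn_compl (codeSupport C) C, hbot, finrank_bot,
    add_zero]

lemma finrank_le_finrank_subcodeOn_compl_singleton_add_one (e : ι) (C : Submodule F (ι → F)) :
    finrank F C ≤ finrank F (subcodeOn {e}ᶜ C) + 1 := by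
  have hle := (restrictCode {e} C).finrank_le
  have heq := finrank_restrictCode_add_finrank_subcodeOn_compl {e} C
  rw [finrank_fintype_fun_eq_card, Fintype.card_coe, card_singleton] at hle
  omega

end Code

section LocalSingletonBound

variable {F ι κ : Type*} [Field F] [Fintype ι] [Fintype κ] [DecidableEq κ] {d : ℕ}

/-- The Singleton bound for all localizations of the family `C`: replace one `C i` by a nonzero
subcode `D` whose support is not everything, and restrict all codes to that support. -/
def LocalSingletonBound (C : κ → Submodule F (ι → F)) (d : ℕ) : Prop :=
  ∀ (i : κ) (D : Submodule F (ι → F)), D ≤ C i → D ≠ ⊥ → codeSupport D ≠ univ →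
    finrank F D + ∑ j ∈ univ.erase i, finrank F (restrictCode (codeSupport D) (C j)) + d ≤
      #(codeSupport D) + Fintype.card κ

variable {C : κ → Submodule F (ι → F)}

-- The subtraction is truncated: for `P = ∅` both sides are `0`.
lemma LocalSingletonBound.sum_finrank_subcodeOn_le (hloc : LocalSingletonBound C d)
    (hd : Fintype.card κ ≤ d) (hfull : ∀ j, codeSupport (C j) = univ) (i₀ : κ) {P : Finset ι}
    (hP : P ≠ univ) :
    ∑ j ∈ univ.erase i₀, finrank F (subcodeOn P (C j)) ≤ #P - 1 := by
  classical
  induction P using Finset.strongInduction with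
  | H P ih =>
  by_cases hzero : ∀ i ∈ univ.erase i₀, subcodeOn P (C i) = ⊥
  · rw [sum_eq_zero fun i hi ↦ by rw [hzero i hi, finrank_bot]]
    exact Nat.zero_le _
  push Not at hzero
  obtain ⟨i, hi, hne⟩ := hzero
  set Q := codeSupport (subcodeOn P (C i))
  have hQP : Q ⊆ P := codeSupport_subcodeOn_subset P (C i)
  have hQne : Q.Nonempty := codeSupport_nonempty.2 hne
  have hlocQ : finrank F (subcodeOn P (C i)) +
      ∑ j ∈ univ.erase i, finrank F (restrictCode Q (C j)) + d ≤ #Q + Fintype.card κ :=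
    hloc i _ (subcodeOn_le P (C i)) hne fun h ↦ hP (univ_subset_iff.1 (h.symm.subset.trans hQP))
  have hrest : ∑ j ∈ univ.erase i₀, finrank F (subcodeOn (P \ Q) (C j)) ≤ #(P \ Q) - 1 :=
    ih (P \ Q) (sdiff_ssubset hQP hQne)
    fun h ↦ hP (univ_subset_iff.1 (h.symm.subset.trans sdiff_subset))
  have hpos : 0 < finrank F (restrictCode Q (C i₀)) :=
    finrank_restrictCode_pos hQne ((hfull i₀).symm ▸ subset_univ Q)
  have hi₀ : i₀ ∈ univ.erase i := mem_erase.2 ⟨(ne_of_mem_erase hi).symm, mem_univ i₀⟩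
  rw [← add_sum_erase _ _ hi₀, erase_right_comm] at hlocQ
  have hsplit : ∑ j ∈ (univ.erase i₀).erase i, finrank F (subcodeOn P (C j)) ≤
      ∑ j ∈ (univ.erase i₀).erase i, finrank F (restrictCode Q (C j)) +
        ∑ j ∈ univ.erase i₀, finrank F (subcodeOn (P \ Q) (C j)) :=
    (sum_finrank_subcodeOn_le_sum_add P Q C _).trans
      (Nat.add_le_add_left (sum_le_sum_of_subset (erase_subset _ _)) _)
  have hcard := card_sdiff_add_card_eq_card hQP
  have hQcard := hQne.card_pos
  rw [← add_sum_erase _ _ hi]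
  omega

lemma LocalSingletonBound.sum_finrank_add_le (hloc : LocalSingletonBound C d)
    (hd : Fintype.card κ ≤ d) (hfull : ∀ j, codeSupport (C j) = univ) {i : κ}
    (hi : 1 < finrank F (C i)) :
    ∑ j, finrank F (C j) + d ≤ Fintype.card ι + Fintype.card κ := by
  classical
  have hCi : C i ≠ ⊥ := by
    intro h
    rw [h, finrank_bot] at hi
    omega
  obtain ⟨e, -⟩ := codeSupport_nonempty.2 hCi
  set D := subcodeOn {e}ᶜ (C i)
  set Q := codeSupport D
  have hdim : finrank F (C i) ≤ finrank F D + 1 :=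
    finrank_le_finrank_subcodeOn_compl_singleton_add_one e (C i)
  have hD : D ≠ ⊥ := by
    intro h
    rw [h, finrank_bot] at hdim
    omega
  have heQ : e ∉ Q := fun h ↦ by simpa using codeSupport_subcodeOn_subset {e}ᶜ (C i) h
  have hQne : Q.Nonempty := codeSupport_nonempty.2 hD
  have hlocQ : finrank F D + ∑ j ∈ univ.erase i, finrank F (restrictCode Q (C j)) + d ≤
      #Q + Fintype.card κ :=
    hloc i D (subcodeOn_le _ _) hD fun h ↦ heQ (h.symm.subset (mem_univ e))
  have hlost : ∑ j ∈ univ.erase i, finrank F (subcodeOn Qᶜ (C j)) ≤ #Qᶜ - 1 :=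
    hloc.sum_finrank_subcodeOn_le hd hfull i fun h ↦ by simp [hQne.ne_empty] at h
  have hsplit : ∑ j ∈ univ.erase i, finrank F (restrictCode Q (C j)) +
      ∑ j ∈ univ.erase i, finrank F (subcodeOn Qᶜ (C j)) =
        ∑ j ∈ univ.erase i, finrank F (C j) := by
    simp only [← sum_add_distrib, finrank_restrictCode_add_finrank_subcodeOn_compl]
  have hcard := card_add_card_compl Q
  have hQc : 0 < #Qᶜ := card_pos.2 ⟨e, mem_compl.2 heQ⟩
  rw [← add_sum_erase _ _ (mem_univ i)]
  omega

end LocalSingletonBound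

section ProductSingletonBound

variable {F ι κ : Type*} [Field F] [DecidableEq F] [Fintype ι] [Fintype κ] {d : ℕ}

/-- Every nonzero product of codewords, one from each code of the family `C`, has Hamming weight at
least `d`. Linear combinations of such products are not constrained. -/
def ProdWeightGE (C : κ → Submodule F (ι → F)) (d : ℕ) : Prop :=
  ∀ c : κ → ι → F, (∀ j, c j ∈ C j) → ∏ j, c j ≠ 0 → d ≤ hammingNorm (∏ j, c j)

lemma ProdWeightGE.mono {C D : κ → Submodule F (ι → F)} (hC : ProdWeightGE C d)
    (hDC : ∀ j, D j ≤ C j) : ProdWeightGE D d :=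
  fun c hc ↦ hC c fun j ↦ hDC j (hc j)

lemma ProdWeightGE.restrict {C : κ → Submodule F (ι → F)} (hC : ProdWeightGE C d)
    {Q : Finset ι} {i : κ} (hi : codeSupport (C i) ⊆ Q) :
    ProdWeightGE (fun j ↦ restrictCode Q (C j)) d := by
  intro x hx hne
  choose c hcC hcx using fun j ↦ mem_restrictCode.1 (hx j)
  have hres : (∏ j, c j) ∘ ((↑) : Q → ι) = ∏ j, x j := by
    ext e
    simp [← hcx]
  have hoff : ∀ e ∉ Set.range (Function.Embedding.subtype (· ∈ Q)), (∏ j, c j) e = 0 := by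
    intro e he
    have hei : e ∉ codeSupport (C i) := fun h ↦ he ⟨⟨e, hi h⟩, rfl⟩
    rw [Finset.prod_apply]
    exact prod_eq_zero (mem_univ i) (eq_zero_of_notMem_codeSupport (hcC i) hei)
  rw [← hres, ← Function.Embedding.coe_subtype,
    hammingNorm_comp_of_eq_zero_off_range (.subtype (· ∈ Q)) hoff]
  refine hC c hcC fun h ↦ hne ?_
  rw [← hres, h]
  rfl

lemma ProdWeightGE.le_card [Nonempty ι] {C : κ → Submodule F (ι → F)} (hC : ProdWeightGE C d)
    (hfull : ∀ j, codeSupport (C j) = univ) : d ≤ Fintype.card ι := by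
  obtain ⟨e⟩ := ‹Nonempty ι›
  choose c hcC hce using fun j ↦ mem_codeSupport.1 ((hfull j).symm ▸ mem_univ e)
  have hne : (∏ j, c j) e ≠ 0 := by
    rw [Finset.prod_apply]
    exact prod_ne_zero_iff.2 fun j _ ↦ hce j
  exact (hC c hcC fun h ↦ hne (congrFun h e)).trans hammingNorm_le_card_fintype

theorem ProdWeightGE.sum_finrank_add_le {ι : Type*} [Fintype ι] [Nonempty ι]
    {C : κ → Submodule F (ι → F)} (hC : ProdWeightGE C d) (hd : Fintype.card κ ≤ d)
    (hfull : ∀ j, codeSupport (C j) = univ) :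
    ∑ j, finrank F (C j) + d ≤ Fintype.card ι + Fintype.card κ := by
  classical
  induction hn : Fintype.card ι using Nat.strong_induction_on generalizing ι with
  | _ n ih =>
  subst hn
  by_cases hdim : ∃ i, 1 < finrank F (C i)
  · obtain ⟨i, hi⟩ := hdim
    refine LocalSingletonBound.sum_finrank_add_le (fun i D hDC hD hQ ↦ ?_) hd hfull hi
    set Q := codeSupport D with hQD
    have hQne : Nonempty Q := (codeSupport_nonempty.2 hD).to_subtype
    have hmono : ∀ j, Function.update C i D j ≤ C j := update_le_self_iff.2 hDC
    have hfullQ : ∀ j, codeSupport (restrictCode Q (Function.update C i D j)) = univ := by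
      intro j
      refine codeSupport_restrictCode ?_
      obtain rfl | hj := eq_or_ne j i
      · rw [Function.update_self]
      · rw [Function.update_of_ne hj, hfull]
        exact subset_univ Q
    have hbound := ih (Fintype.card Q) (by simpa using (card_lt_iff_ne_univ Q).2 hQ)
      ((hC.mono hmono).restrict (i := i) (by rw [Function.update_self])) hfullQ rfl
    rwa [← add_sum_erase _ _ (mem_univ i), Function.update_self, hQD,
      finrank_restrictCode_codeSupport, Fintype.card_coe,
      sum_congr rfl fun j hj ↦ by rw [Function.update_of_ne (ne_of_mem_erase hj)]] at hbound
  · push Not at hdim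
    have hsum : ∑ j, finrank F (C j) ≤ Fintype.card κ := by
      simpa using sum_le_sum fun j (_ : j ∈ univ) ↦ hdim j
    have hle := hC.le_card hfull
    omega

theorem ProdWeightGE.card_mul_finrank_le {C : Submodule F (ι → F)}
    (hC : ProdWeightGE (fun _ : κ ↦ C) (Fintype.card κ)) :
    Fintype.card κ * finrank F C ≤ Fintype.card ι := by
  classical
  obtain hκ | ⟨⟨i⟩⟩ := isEmpty_or_nonempty κ
  · simp
  obtain rfl | hne := eq_or_ne C ⊥
  · simp
  set Q := codeSupport C with hQ
  have : Nonempty Q := (codeSupport_nonempty.2 hne).to_subtype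
  have hbound := (hC.restrict (i := i) hQ.symm.subset).sum_finrank_add_le le_rfl
    fun _ ↦ codeSupport_restrictCode hQ.subset
  rw [hQ, finrank_restrictCode_codeSupport, sum_const, card_univ, smul_eq_mul,
    Fintype.card_coe] at hbound
  exact (Nat.le_of_add_le_add_right hbound).trans (card_le_univ _)

end ProductSingletonBound

section RepetitionCode

variable {F α β ι : Type*} [Field F]

variable (F) in
/-- The code of the words that are constant on each block `f '' ({a} ×ˢ univ)` and vanish outside
the range of `f`; each information symbol `x a` is repeated once for every element of `β`. -/
def repetitionCode (f : α × β ↪ ι) : Submodule F (ι → F) :=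
  LinearMap.range (Function.ExtendByZero.linearMap F f ∘ₗ LinearMap.funLeft F F Prod.fst)

lemma mem_repetitionCode {f : α × β ↪ ι} {c : ι → F} :
    c ∈ repetitionCode F f ↔ ∃ x : α → F, Function.extend f (x ∘ Prod.fst) 0 = c := Iff.rfl

lemma finrank_repetitionCode [Fintype α] [Nonempty β] (f : α × β ↪ ι) :
    finrank F (repetitionCode F f) = Fintype.card α := by
  have hinj : Function.Injective
      (Function.ExtendByZero.linearMap F f ∘ₗ LinearMap.funLeft F F Prod.fst) :=
    (Function.extend_injective f.injective (0 : ι → F)).comp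
      Prod.fst_surjective.injective_comp_right
  rw [repetitionCode, LinearMap.finrank_range_of_inj hinj, finrank_fintype_fun_eq_card]

lemma mul_mem_repetitionCode {f : α × β ↪ ι} {a b : ι → F} (ha : a ∈ repetitionCode F f)
    (hb : b ∈ repetitionCode F f) : a * b ∈ repetitionCode F f := by
  obtain ⟨x, rfl⟩ := mem_repetitionCode.1 ha
  obtain ⟨y, rfl⟩ := mem_repetitionCode.1 hb
  refine mem_repetitionCode.2 ⟨x * y, ?_⟩
  rw [← Function.extend_mul, mul_zero]
  rfl

lemma card_le_hammingNorm_of_mem_repetitionCode [DecidableEq F] [Fintype β] [Fintype ι]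
    {f : α × β ↪ ι} {c : ι → F} (hc : c ∈ repetitionCode F f) (hne : c ≠ 0) :
    Fintype.card β ≤ hammingNorm c := by
  obtain ⟨x, rfl⟩ := mem_repetitionCode.1 hc
  obtain ⟨a, ha⟩ : ∃ a, x a ≠ 0 := by
    by_contra! h
    exact hne (by rw [show x = 0 from funext h]; exact Function.extend_zero f)
  have hinj : Function.Injective fun b ↦ f (a, b) :=
    f.injective.comp (Prod.mk_right_injective a)
  refine card_le_card_of_injOn _ (fun b _ ↦ ?_) hinj.injOn
  simpa [f.injective.extend_apply] using ha

end RepetitionCode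

section PowCode

variable {F : Type*} [Field F] {n t : ℕ} {C : Submodule F (Fin n → F)}

lemma prod_mem_powCode {c : Fin t → Fin n → F} (hc : ∀ i, c i ∈ C) :
    ∏ i, c i ∈ powCode F C t := by
  induction t using Nat.twoStepInduction with
  | zero => exact Submodule.mem_top
  | one => simpa [powCode] using hc 0
  | more s _ ih =>
    rw [Fin.prod_univ_castSucc]
    exact Submodule.subset_span ⟨_, ih fun i ↦ hc i.castSucc, _, hc (Fin.last _), rfl⟩

lemma powCode_le_of_mul_mem (hC : ∀ a ∈ C, ∀ b ∈ C, a * b ∈ C) (ht : t ≠ 0) :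
    powCode F C t ≤ C := by
  induction t, Nat.one_le_iff_ne_zero.2 ht using Nat.le_induction with
  | base => exact le_rfl
  | succ s hs ih =>
    obtain ⟨r, rfl⟩ := Nat.exists_eq_add_of_le' hs
    refine Submodule.span_le.2 ?_
    rintro _ ⟨a, ha, b, hb, rfl⟩
    exact hC a (ih r.succ_ne_zero ha) b hb

lemma prodWeightGE_of_powCode [DecidableEq F] {d s : ℕ} (hs : s ≠ 0) (hst : s ≤ t)
    (hC : ∀ z ∈ powCode F C t, z ≠ 0 → d ≤ hammingNorm z) :
    ProdWeightGE (fun _ : Fin s ↦ C) d := by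
  intro c hc hne
  have : Nonempty (Fin s) := ⟨⟨0, Nat.pos_of_ne_zero hs⟩⟩
  have hg := Function.invFun_surjective (Fin.castLE_injective hst)
  have hnorm := hammingNorm_prod_comp_of_surjective hg c
  rw [← hnorm]
  refine hC _ (prod_mem_powCode fun i ↦ hc _) ?_
  rwa [← hammingNorm_ne_zero_iff, hnorm, hammingNorm_ne_zero_iff]

end PowCode

theorem stmt8_general {F : Type*} [Field F] [DecidableEq F] {n d t : ℕ}
    (hd : 1 ≤ d) (hdt : d ≤ t) :
    IsGreatest {k | ∃ C : Submodule F (Fin n → F), finrank F C = k ∧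
      ∀ z ∈ powCode F C t, z ≠ 0 → d ≤ hammingNorm z} (n / d) := by
  constructor
  · have : Nonempty (Fin d) := ⟨⟨0, hd⟩⟩
    let f : Fin (n / d) × Fin d ↪ Fin n :=
      finProdFinEquiv.toEmbedding.trans (Fin.castLEEmb (Nat.div_mul_le_self n d))
    refine ⟨repetitionCode F f, by simp [finrank_repetitionCode], fun z hz hne ↦ ?_⟩
    have hzf : z ∈ repetitionCode F f :=
      powCode_le_of_mul_mem (fun _ ha _ hb ↦ mul_mem_repetitionCode ha hb) (by omega) hz
    simpa using card_le_hammingNorm_of_mem_repetitionCode hzf hne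
  · rintro k ⟨C, rfl, hC⟩
    have hprod : ProdWeightGE (fun _ : Fin d ↦ C) (Fintype.card (Fin d)) := by
      rw [Fintype.card_fin]
      exact prodWeightGE_of_powCode (by omega) hdt hC
    have hbound := hprod.card_mul_finrank_le
    rw [Fintype.card_fin, Fintype.card_fin] at hbound
    rwa [Nat.le_div_iff_mul_le hd, mul_comm]

theorem stmt8 {F : Type*} [Field F] [Fintype F] [DecidableEq F] {n d t : ℕ}
    (hd : 1 ≤ d) (hdt : d ≤ t) (htn : t ≤ n) :
    IsGreatest {k | ∃ C : Submodule F (Fin n → F), Module.finrank F C = k ∧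
      ∀ z ∈ powCode F C t, z ≠ 0 → d ≤ hammingNorm z} (n / d) :=
  stmt8_general hd hdt

end
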